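/- A Laurent polynomial taking values in the unit circle on the unit circle is a monomial: let N ∈ ℕ and a : ℤ → ℂ be a function supported in {−N, …, N}, and set p(z) = Σ_{k=−N}^{N} a_k z^k for z ∈ ℂ, z ≠ 0. If |p(z)| = 1 for all z ∈ ℂ with |z| = 1, then there exist n ∈ ℤ and c ∈ ℂ with |c| = 1 such that p(z) = c·z^n for all z with |z| = 1 (equivalently, a_k = 0 for all k ≠ n and a_n = c). -/

import Mathlib

/-!
Let `p*` be the Laurent polynomial obtained from `p` by conjugating the coefficients and replacing
`z` by `z⁻¹`. On the unit circle `z⁻¹` is the conjugate of `z`, so `p*(z)` is the conjugate of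
`p(z)`. If `|p(z)| = 1` at infinitely many points of the circle, then `p* p` takes the value `1` at
infinitely many points, hence `p* p = 1`. So `p` is a unit of the ring of Laurent polynomials, and
the units of this ring are the monomials with invertible coefficient.
-/

section Laurent

open scoped LaurentPolynomial
open LaurentPolynomial (C T eval₂ invert)

section Domain

variable {R : Type*} [CommRing R] [IsDomain R]

theorem exists_eq_C_mul_X_pow_of_dvd_X_pow {f : Polynomial R} {n : ℕ}
    (h : f ∣ Polynomial.X ^ n) : ∃ (c : R) (i : ℕ), f = Polynomial.C c * Polynomial.X ^ i := by
  obtain ⟨i, -, hfi⟩ := (dvd_prime_pow Polynomial.prime_X n).1 h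
  obtain ⟨u, hu⟩ := hfi.symm
  obtain ⟨c, -, hc⟩ := Polynomial.isUnit_iff.1 u.isUnit
  exact ⟨c, i, by rw [← hu, ← hc, mul_comm]⟩

theorem exists_eq_C_mul_T_of_isUnit {p : R[T;T⁻¹]} (hp : IsUnit p) :
    ∃ (c : R) (n : ℤ), p = C c * T n := by
  obtain ⟨q, hpq⟩ := hp.exists_right_inv
  obtain ⟨m, f, hf⟩ := p.exists_T_pow
  obtain ⟨n, g, hg⟩ := q.exists_T_pow
  have hfg : f * g = Polynomial.X ^ (m + n) := by
    apply Polynomial.toLaurent_injective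
    rw [map_mul, hf, hg, mul_mul_mul_comm, hpq, one_mul, ← LaurentPolynomial.T_add,
      Polynomial.toLaurent_X_pow, Nat.cast_add]
  obtain ⟨c, i, hfi⟩ := exists_eq_C_mul_X_pow_of_dvd_X_pow (Dvd.intro g hfg)
  refine ⟨c, i - m, ?_⟩
  calc p = p * T m * T (-m) := by simp
    _ = C c * T i * T (-m) := by rw [← hf, hfi, Polynomial.toLaurent_C_mul_X_pow]
    _ = C c * T (i - m) := by rw [LaurentPolynomial.T_sub, mul_assoc]

theorem eq_of_infinite_eval₂_eq {p q : R[T;T⁻¹]}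
    (h : {u : Rˣ | eval₂ (RingHom.id R) u p = eval₂ (RingHom.id R) u q}.Infinite) : p = q := by
  obtain ⟨n, f, hf⟩ := (p - q).exists_T_pow
  have hf_zero : f = 0 := by
    refine f.eq_zero_of_infinite_isRoot ((h.image Units.val_injective.injOn).mono ?_)
    rintro _ ⟨u, hu, rfl⟩
    have hpq : eval₂ (RingHom.id R) u (p - q) = 0 := by rw [map_sub, sub_eq_zero.2 hu]
    have hfu := congrArg (eval₂ (RingHom.id R) u) hf
    rwa [LaurentPolynomial.eval₂_toLaurent, map_mul, hpq, zero_mul] at hfu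
  rw [hf_zero, map_zero] at hf
  exact sub_eq_zero.1 ((LaurentPolynomial.isUnit_T n).mul_left_eq_zero.1 hf.symm)

end Domain

section Star

variable {R : Type*} [CommRing R] [StarRing R]

/-- The conjugate reciprocal `p*` of a Laurent polynomial `p = ∑ aₖ Tᵏ`, that is
`p* = ∑ (star aₖ) T⁻ᵏ`. It is encoded as a ring homomorphism in `p`. -/
noncomputable def conjReciprocal : R[T;T⁻¹] →+* R[T;T⁻¹] :=
  (invert : R[T;T⁻¹] ≃ₐ[R] R[T;T⁻¹]).toRingHom.comp
    (AddMonoidAlgebra.mapRingHom ℤ (starRingEnd R))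

theorem conjReciprocal_C_mul_T (c : R) (n : ℤ) :
    conjReciprocal (C c * T n) = C (star c) * T (-n) := by
  simp [conjReciprocal, ← LaurentPolynomial.single_eq_C_mul_T, invert, starRingEnd_apply]

theorem eval₂_conjReciprocal {u : Rˣ} (hu : (u : R) ∈ unitary R) (p : R[T;T⁻¹]) :
    eval₂ (RingHom.id R) u (conjReciprocal p) = star (eval₂ (RingHom.id R) u p) := by
  have hu_inv : u⁻¹ = star u :=
    inv_eq_of_mul_eq_one_left (Units.ext (Unitary.star_mul_self_of_mem hu))
  induction p using LaurentPolynomial.induction_on' with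
  | add p q hp hq => simp only [map_add, star_add, hp, hq]
  | C_mul_T n c =>
    rw [conjReciprocal_C_mul_T, LaurentPolynomial.eval₂_C_mul_T, LaurentPolynomial.eval₂_C_mul_T,
      zpow_neg, ← inv_zpow, hu_inv, ← star_zpow, star_mul', Units.coe_star,
      RingHom.id_apply, RingHom.id_apply]

variable [IsDomain R]

theorem conjReciprocal_mul_self_eq_one {p : R[T;T⁻¹]}
    (h : {u : Rˣ | (u : R) ∈ unitary R ∧ eval₂ (RingHom.id R) u p ∈ unitary R}.Infinite) :
    conjReciprocal p * p = 1 := by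
  refine eq_of_infinite_eval₂_eq (h.mono ?_)
  rintro u ⟨hu, hpu⟩
  rw [Set.mem_ofPred_eq, map_mul, eval₂_conjReciprocal hu, map_one,
    Unitary.star_mul_self_of_mem hpu]

theorem exists_eq_C_mul_T_of_infinite_eval₂_mem_unitary {p : R[T;T⁻¹]}
    (h : {u : Rˣ | (u : R) ∈ unitary R ∧ eval₂ (RingHom.id R) u p ∈ unitary R}.Infinite) :
    ∃ (c : R) (n : ℤ), c ∈ unitary R ∧ p = C c * T n := by
  have hp := conjReciprocal_mul_self_eq_one h
  obtain ⟨c, n, rfl⟩ := exists_eq_C_mul_T_of_isUnit (IsUnit.of_mul_eq_one_right _ hp)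
  refine ⟨c, n, Unitary.mem_iff_star_mul_self.2 ?_, rfl⟩
  rw [conjReciprocal_C_mul_T, mul_mul_mul_comm, ← map_mul, ← LaurentPolynomial.T_add,
    neg_add_cancel, LaurentPolynomial.T_zero, mul_one] at hp
  simpa [-map_mul] using congrArg (fun q : R[T;T⁻¹] => q.coeff 0) hp

end Star

theorem laurent_unimodular_on_circle_is_monomial_general {K : Type*} [Field K] [StarRing K]
    (S : Finset ℤ) (a : ℤ → K) (hsupp : ∀ k, a k ≠ 0 → k ∈ S)
    (hinf : {z : K | z ∈ unitary K ∧ ∑ k ∈ S, a k * z ^ k ∈ unitary K}.Infinite) :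
    ∃ (n : ℤ) (c : K), c ∈ unitary K ∧ a n = c ∧ (∀ k, k ≠ n → a k = 0) ∧
      ∀ z : K, ∑ k ∈ S, a k * z ^ k = c * z ^ n := by
  let p : K[T;T⁻¹] := ∑ k ∈ S, C (a k) * T k
  have hcoeff (k : ℤ) : p.coeff k = a k := by
    simpa [p, ← LaurentPolynomial.single_eq_C_mul_T, Finsupp.single_apply] using
      fun hk => (not_imp_comm.1 (hsupp k) hk).symm
  have heval (u : Kˣ) : eval₂ (RingHom.id K) u p = ∑ k ∈ S, a k * (u : K) ^ k := by
    simp [p]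
  obtain ⟨c, n, hc, hp⟩ := exists_eq_C_mul_T_of_infinite_eval₂_mem_unitary (p := p) <| by
    simp only [heval]
    refine hinf.preimage fun z hz => ?_
    exact ⟨Unitary.toUnits ⟨z, hz.1⟩, rfl⟩
  have ha (k : ℤ) : a k = if n = k then c else 0 := by
    rw [← hcoeff, hp, ← LaurentPolynomial.single_eq_C_mul_T, AddMonoidAlgebra.coeff_single,
      Finsupp.single_apply]
  have han : a n = c := by simp [ha]
  have hak (k : ℤ) (hk : k ≠ n) : a k = 0 := by simp [ha, hk.symm]
  refine ⟨n, c, hc, han, hak, fun z => ?_⟩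
  rw [← han]
  refine Finset.sum_eq_single n (fun k _ hk => by rw [hak k hk, zero_mul]) fun hn => ?_
  rw [not_imp_comm.1 (hsupp n) hn, zero_mul]

end Laurent

theorem mem_unitary_iff_norm_eq_one {𝕜 : Type*} [RCLike 𝕜] {z : 𝕜} :
    z ∈ unitary 𝕜 ↔ ‖z‖ = 1 := by
  refine ⟨CStarRing.norm_of_mem_unitary, fun hz => Unitary.mem_iff_star_mul_self.2 ?_⟩
  rw [← starRingEnd_apply, RCLike.conj_mul, hz, RCLike.ofReal_one, one_pow]

theorem infinite_unitary_complex : (unitary ℂ : Set ℂ).Infinite := by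
  have : Infinite (Set.Ioc (-Real.pi) Real.pi) :=
    (Set.Ioc_infinite (neg_lt_self Real.pi_pos)).to_subtype
  have : Infinite Circle := Circle.argEquiv.infinite_iff.2 this
  exact Set.infinite_of_injective_forall_mem (α := Circle) Circle.coe_injective
    fun z => mem_unitary_iff_norm_eq_one.2 z.norm_coe

/-- A Laurent polynomial `p(z) = Σ_{k=-N}^{N} a_k z^k` with `|p(z)| = 1` for all `z` on the
unit circle is a monomial: there are `n : ℤ` and `c : ℂ` with `|c| = 1` such that `a_n = c`,
`a_k = 0` for `k ≠ n`, and `p(z) = c·zⁿ` on the unit circle. -/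
theorem laurent_unimodular_on_circle_is_monomial (N : ℕ) (a : ℤ → ℂ)
    (hsupp : ∀ k : ℤ, a k ≠ 0 → k ∈ Finset.Icc (-(N : ℤ)) (N : ℤ))
    (hmod : ∀ z : ℂ, ‖z‖ = 1 → ‖∑ k ∈ Finset.Icc (-(N : ℤ)) (N : ℤ), a k * z ^ k‖ = 1) :
    ∃ (n : ℤ) (c : ℂ), ‖c‖ = 1 ∧ a n = c ∧ (∀ k : ℤ, k ≠ n → a k = 0) ∧
      ∀ z : ℂ, ‖z‖ = 1 → (∑ k ∈ Finset.Icc (-(N : ℤ)) (N : ℤ), a k * z ^ k) = c * z ^ n := by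
  simp only [← mem_unitary_iff_norm_eq_one] at hmod ⊢
  obtain ⟨n, c, hc, han, hak, hp⟩ := laurent_unimodular_on_circle_is_monomial_general _ a hsupp
    (infinite_unitary_complex.mono fun z hz => ⟨hz, hmod z hz⟩)
  exact ⟨n, c, hc, han, hak, fun z _ => hp z⟩
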